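/- (Weyl's alternative.) If for some z₀ ∈ ℂ every solution of (ℓ − z₀)u = 0 lies in L² near a, then for every z ∈ ℂ every solution of (ℓ − z)u = 0 lies in L² near a; consequently, at the endpoint a, ℓ is either in the limit-circle case or in the limit-point case, and the same holds at the endpoint b. -/

import Mathlib

open MeasureTheory Set Filter
open scoped ENNReal NNReal Classical

/-- Forward shift of a time scale. -/
noncomputable def tsSigma (T : Set ℝ) (t : ℝ) : ℝ :=
  if ({s | s ∈ T ∧ t < s}).Nonempty then sInf {s | s ∈ T ∧ t < s} else sSup T

/-- Backward shift of a time scale. -/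
noncomputable def tsRho (T : Set ℝ) (t : ℝ) : ℝ :=
  if ({s | s ∈ T ∧ s < t}).Nonempty then sSup {s | s ∈ T ∧ s < t} else sInf T

/-- `𝕋_κ` : the time scale with the left endpoint removed if it is finite and right-scattered. -/
noncomputable def tsKappa (T : Set ℝ) : Set ℝ :=
  if BddBelow T ∧ sInf T < tsSigma T (sInf T) then T \ {sInf T} else T

/-- Extension `p̄` of a function on `𝕋_κ` to all of `ℝ`. -/
noncomputable def extK (T : Set ℝ) (p : ℝ → ℂ) (t : ℝ) : ℂ :=
  if t ∈ tsKappa T then p t else p (tsSigma (tsKappa T) t)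

/-- Coercion of a real-valued coefficient to a complex-valued one. -/
def cR (f : ℝ → ℝ) : ℝ → ℂ := fun t => (f t : ℂ)

/-- `(u, u^[1])` is an integrated pair with density `h` against the measure `μ = dσ_κ`. -/
def IsPair (T : Set ℝ) (μ : Measure ℝ) (p : ℝ → ℂ) (u u1 h : ℝ → ℂ) : Prop :=
  ∀ c x : ℝ, c ≤ x →
    u x = u c + ∫ t in c..x, u1 t / extK T p t ∧
    u1 x = u1 c + ∫ t in Set.Ioc c x, h t ∂μ

/-- `(u, u^[1])` is a solution pair of `(ℓ - z) u = g`. -/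
def IsSLSol (T : Set ℝ) (μ : Measure ℝ) (p r q : ℝ → ℂ) (z : ℂ) (g : ℝ → ℂ)
    (u u1 : ℝ → ℂ) : Prop :=
  IsPair T μ p u u1 (fun t => (q t - z * r t) * u t - r t * g t)

/-- Wronskian of two pairs. -/
def Wr (u u1 v v1 : ℝ → ℂ) (x : ℝ) : ℂ := u x * v1 x - u1 x * v x

/-- The integrand `|u|² r` as an `ℝ≥0∞`-valued function. -/
noncomputable def sqWeight (r : ℝ → ℝ) (u : ℝ → ℂ) (t : ℝ) : ℝ≥0∞ :=
  ((‖u t‖₊ : ℝ≥0∞)) ^ 2 * ENNReal.ofReal (r t)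

/-- `u` lies in `L²` near the left endpoint `a`. -/
def L2NearLeft (T : Set ℝ) (μ : Measure ℝ) (r : ℝ → ℝ) (u : ℝ → ℂ) : Prop :=
  ∀ c ∈ tsKappa T, ∫⁻ t in {t | (∃ s ∈ T, s < t) ∧ t ≤ c} ∩ tsKappa T, sqWeight r u t ∂μ < ∞

/-- `u` lies in `L²` near the right endpoint `b`. -/
def L2NearRight (T : Set ℝ) (μ : Measure ℝ) (r : ℝ → ℝ) (u : ℝ → ℂ) : Prop :=
  ∀ c ∈ tsKappa T, ∫⁻ t in {t | c ≤ t ∧ ∃ s ∈ T, t < s} ∩ tsKappa T, sqWeight r u t ∂μ < ∞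

/-- `ℓ` is in the limit-circle case at the left endpoint. -/
def LimitCircleLeft (T : Set ℝ) (μ : Measure ℝ) (p r q : ℝ → ℝ) : Prop :=
  ∀ z : ℂ, ∀ u u1 : ℝ → ℂ, IsSLSol T μ (cR p) (cR r) (cR q) z 0 u u1 → L2NearLeft T μ r u

/-- `ℓ` is in the limit-point case at the left endpoint. -/
def LimitPointLeft (T : Set ℝ) (μ : Measure ℝ) (p r q : ℝ → ℝ) : Prop :=
  ∀ z : ℂ, ∃ u u1 : ℝ → ℂ, IsSLSol T μ (cR p) (cR r) (cR q) z 0 u u1 ∧ ¬ L2NearLeft T μ r u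

/-- `ℓ` is in the limit-circle case at the right endpoint. -/
def LimitCircleRight (T : Set ℝ) (μ : Measure ℝ) (p r q : ℝ → ℝ) : Prop :=
  ∀ z : ℂ, ∀ u u1 : ℝ → ℂ, IsSLSol T μ (cR p) (cR r) (cR q) z 0 u u1 → L2NearRight T μ r u

/-- `ℓ` is in the limit-point case at the right endpoint. -/
def LimitPointRight (T : Set ℝ) (μ : Measure ℝ) (p r q : ℝ → ℝ) : Prop :=
  ∀ z : ℂ, ∃ u u1 : ℝ → ℂ, IsSLSol T μ (cR p) (cR r) (cR q) z 0 u u1 ∧ ¬ L2NearRight T μ r u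

/-- The action `ℓ u = (-h + q u)/r` of the differential expression on a pair with density `h`. -/
noncomputable def ellApply (r q : ℝ → ℝ) (h u : ℝ → ℂ) (t : ℝ) : ℂ :=
  (-h t + (q t : ℂ) * u t) / (r t : ℂ)

/-- Membership in `L²(𝕋_κ; r dσ_κ)`. -/
def MemL2T (T : Set ℝ) (μ : Measure ℝ) (r : ℝ → ℝ) (u : ℝ → ℂ) : Prop :=
  ∫⁻ t in tsKappa T, sqWeight r u t ∂μ < ∞

/-- The pair `(u, u^[1])` with density `h` belongs to `D_ℓ²`. -/
def MemD2 (T : Set ℝ) (μ : Measure ℝ) (p r q : ℝ → ℝ) (u u1 h : ℝ → ℂ) : Prop :=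
  LocallyIntegrable h μ ∧ IsPair T μ (cR p) u u1 h ∧ MemL2T T μ r u ∧
    MemL2T T μ r (ellApply r q h u)

/-- The filter `x ↓ a`, `x ∈ 𝕋`. -/
noncomputable def leftLimFilter (T : Set ℝ) : Filter ℝ :=
  if BddBelow T then nhdsWithin (sInf T) T else Filter.atBot ⊓ Filter.principal T

/-- The filter `x ↑ b`, `x ∈ 𝕋`. -/
noncomputable def rightLimFilter (T : Set ℝ) : Filter ℝ :=
  if BddAbove T then nhdsWithin (sSup T) T else Filter.atTop ⊓ Filter.principal T

/-- The measure `r dσ_κ` on `𝕋_κ`, giving the Hilbert space `L²(𝕋_κ; r dσ_κ)`. -/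
noncomputable def wM (T : Set ℝ) (μ : Measure ℝ) (r : ℝ → ℝ) : Measure ℝ :=
  (μ.restrict (tsKappa T)).withDensity fun t => ENNReal.ofReal (r t)



section core

theorem wa_ibp_le {𝕜 : Type*} [RCLike 𝕜] (μ : Measure ℝ) [IsLocallyFiniteMeasure μ]
    {u f w h : ℝ → 𝕜} {c d : ℝ} (hcd : c ≤ d)
    (hf : LocallyIntegrable f volume) (hh : LocallyIntegrable h μ)
    (hu : ∀ x ∈ Icc c d, u x = u c + ∫ t in c..x, f t)
    (hw : ∀ x ∈ Icc c d, w x = w c + ∫ t in c..x, h t ∂μ) :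
    u d * w d - u c * w c = (∫ t in c..d, u t * h t ∂μ) + ∫ t in c..d, f t * w t := by
  have hfi : Integrable f (volume.restrict (Ioc c d)) :=
    (hf.integrableOn_isCompact isCompact_Icc).mono_set Ioc_subset_Icc_self
  have hhi : Integrable h (μ.restrict (Ioc c d)) :=
    (hh.integrableOn_isCompact isCompact_Icc).mono_set Ioc_subset_Icc_self
  rw [intervalIntegral.integral_of_le hcd, intervalIntegral.integral_of_le hcd]
  set l := volume.restrict (Ioc c d) with hl
  set m := μ.restrict (Ioc c d) with hm
  have hu' : ∀ t ∈ Ioc c d, u t = u c + ∫ s, (Iic t).indicator f s ∂l := by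
    intro t ht
    rw [hu t ⟨ht.1.le, ht.2⟩, intervalIntegral.integral_of_le ht.1.le,
      integral_indicator measurableSet_Iic, hl, Measure.restrict_restrict measurableSet_Iic]
    congr 3
    ext s; simp only [mem_Ioc, mem_inter_iff, mem_Iic]
    constructor
    · rintro ⟨a, b⟩; exact ⟨b, a, b.trans ht.2⟩
    · rintro ⟨a, b, _⟩; exact ⟨b, a⟩
  have hw' : ∀ t ∈ Ioc c d, w t = w c + ∫ s, (Iic t).indicator h s ∂m := by
    intro t ht
    rw [hw t ⟨ht.1.le, ht.2⟩, intervalIntegral.integral_of_le ht.1.le,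
      integral_indicator measurableSet_Iic, hm, Measure.restrict_restrict measurableSet_Iic]
    congr 3
    ext s; simp only [mem_Ioc, mem_inter_iff, mem_Iic]
    constructor
    · rintro ⟨a, b⟩; exact ⟨b, a, b.trans ht.2⟩
    · rintro ⟨a, b, _⟩; exact ⟨b, a⟩
  have hud : u d = u c + ∫ s, f s ∂l := by
    rw [hu d ⟨hcd, le_rfl⟩, intervalIntegral.integral_of_le hcd]
  have hwd : w d = w c + ∫ s, h s ∂m := by
    rw [hw d ⟨hcd, le_rfl⟩, intervalIntegral.integral_of_le hcd]
  -- joint integrability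
  have hprod : Integrable (fun z : ℝ × ℝ => f z.1 * h z.2) (l.prod m) := hfi.mul_prod hhi
  have hS : MeasurableSet {z : ℝ × ℝ | z.2 ≤ z.1} := measurableSet_le measurable_snd measurable_fst
  have hS' : MeasurableSet {z : ℝ × ℝ | z.1 ≤ z.2} := measurableSet_le measurable_fst measurable_snd
  have hI : Integrable (Function.uncurry fun s t => f s * (Iic s).indicator h t) (l.prod m) := by
    refine (hprod.indicator hS).congr (ae_of_all _ ?_)
    rintro ⟨s, t⟩
    simp only [indicator, mem_ofPred_eq, Function.uncurry, mem_Iic]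
    split_ifs <;> simp
  have hI' : Integrable (Function.uncurry fun s t => (Iic t).indicator f s * h t) (l.prod m) := by
    refine (hprod.indicator hS').congr (ae_of_all _ ?_)
    rintro ⟨s, t⟩
    simp only [indicator, mem_ofPred_eq, Function.uncurry, mem_Iic]
    split_ifs <;> simp
  have hJ := hI.integral_prod_right
  have hJ' := hI'.integral_prod_right
  have hK := hI.integral_prod_left
  simp only [Function.uncurry_apply_pair] at hJ hJ' hK
  have e1 : ∫ t, u t * h t ∂m = u c * (∫ t, h t ∂m) +
      ∫ t, ∫ s, (Iic t).indicator f s * h t ∂l ∂m := by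
    rw [← integral_const_mul, ← integral_add (hhi.const_mul _) hJ']
    apply integral_congr_ae
    filter_upwards [ae_restrict_mem (μ := μ) (measurableSet_Ioc (a := c) (b := d))] with t ht
    rw [hu' t ht, integral_mul_const]; ring
  have e2 : ∫ t, f t * w t ∂l = w c * (∫ t, f t ∂l) +
      ∫ s, ∫ t, f s * (Iic s).indicator h t ∂m ∂l := by
    rw [← integral_const_mul, ← integral_add (hfi.const_mul _) hK]
    apply integral_congr_ae
    filter_upwards [ae_restrict_mem (μ := volume) (measurableSet_Ioc (a := c) (b := d))] with t ht
    rw [hw' t ht, integral_const_mul]; ring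
  have e3 : (∫ t, ∫ s, (Iic t).indicator f s * h t ∂l ∂m) +
      (∫ t, ∫ s, f s * (Iic s).indicator h t ∂l ∂m) = (∫ s, f s ∂l) * ∫ t, h t ∂m := by
    rw [← integral_add hJ' hJ, ← integral_const_mul]
    apply integral_congr_ae
    filter_upwards [hI.prod_left_ae, hI'.prod_left_ae] with t h1 h2
    simp only [Function.uncurry_apply_pair] at h1 h2
    rw [← integral_mul_const, ← integral_add h2 h1]
    apply integral_congr_ae
    have : ∀ᵐ s ∂l, s ≠ t := by
      apply ae_restrict_of_ae
      simp [ae_iff]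
    filter_upwards [this] with s hs
    simp only [indicator, mem_Iic]
    rcases lt_or_gt_of_ne hs with h | h
    · simp [h.le, h.not_ge]
    · simp [h.le, h.not_ge]
  rw [e1, e2, integral_integral_swap hI, hud, hwd]
  linear_combination (-1 : 𝕜) * e3

theorem wa_intervalIntegrable {E : Type*} [NormedAddCommGroup E] {μ : Measure ℝ} {f : ℝ → E}
    (hf : LocallyIntegrable f μ) (a b : ℝ) :
    IntervalIntegrable f μ a b :=
  ⟨(hf.integrableOn_isCompact isCompact_Icc).mono_set Ioc_subset_Icc_self,
   (hf.integrableOn_isCompact isCompact_Icc).mono_set Ioc_subset_Icc_self⟩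

/-- all-orders version -/
theorem wa_ibp {𝕜 : Type*} [RCLike 𝕜] (μ : Measure ℝ) [IsLocallyFiniteMeasure μ]
    {u f w h : ℝ → 𝕜} 
    (hf : LocallyIntegrable f volume) (hh : LocallyIntegrable h μ)
    (hu : ∀ c x, u x = u c + ∫ t in c..x, f t)
    (hw : ∀ c x, w x = w c + ∫ t in c..x, h t ∂μ) (c d : ℝ) :
    u d * w d - u c * w c = (∫ t in c..d, u t * h t ∂μ) + ∫ t in c..d, f t * w t := by
  rcases le_total c d with hcd | hcd
  · exact wa_ibp_le μ hcd hf hh (fun x _ => hu c x) (fun x _ => hw c x)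
  · have := wa_ibp_le μ hcd hf hh (fun x _ => hu d x) (fun x _ => hw d x)
    rw [intervalIntegral.integral_symm d c, intervalIntegral.integral_symm d c]
    linear_combination -this

theorem wa_from_zero {E : Type*} [NormedAddCommGroup E] [NormedSpace ℝ E] {μ : Measure ℝ}
    {u f : ℝ → E} {A : E} (hf : LocallyIntegrable f μ)
    (hu : ∀ x, u x = A + ∫ t in (0:ℝ)..x, f t ∂μ) (c x : ℝ) :
    u x = u c + ∫ t in c..x, f t ∂μ := by
  rw [hu x, hu c, add_assoc, intervalIntegral.integral_add_adjacent_intervals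
    (wa_intervalIntegrable hf _ _) (wa_intervalIntegrable hf _ _)]

theorem wa_continuous {E : Type*} [NormedAddCommGroup E] [NormedSpace ℝ E] 
    {u f : ℝ → E} (hf : LocallyIntegrable f volume)
    (hu : ∀ c x, u x = u c + ∫ t in c..x, f t) : Continuous u := by
  have : u = fun x => u 0 + ∫ t in (0:ℝ)..x, f t := funext (hu 0)
  rw [this]
  exact continuous_const.add
    (intervalIntegral.continuous_primitive (fun a b => wa_intervalIntegrable hf a b) 0)

theorem wa_pow {f F : ℝ → ℝ} (hf : LocallyIntegrable f volume)
    (hF : ∀ x, F x = ∫ t in (0:ℝ)..x, f t) (n : ℕ) (c x : ℝ) :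
    F x ^ (n+1) = F c ^ (n+1) + ∫ t in c..x, (n+1) * F t ^ n * f t := by
  have hF' : ∀ c x, F x = F c + ∫ t in c..x, f t :=
    wa_from_zero (A := 0) hf (by simpa using hF)
  have hc : Continuous F := wa_continuous hf hF'
  induction n generalizing c x with
  | zero => simpa using hF' c x
  | succ n ih =>
    have hl : LocallyIntegrable (fun t => ((n:ℝ)+1) * F t ^ n * f t) volume := by
      have := hf.continuous_smul (g := fun t => ((n:ℝ)+1) * F t ^ n) (by fun_prop)
      simpa [smul_eq_mul] using this
    have hl2 : LocallyIntegrable (fun t => F t ^ (n+1) * f t) volume := by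
      have := hf.continuous_smul (g := fun t => F t ^ (n+1)) (by fun_prop)
      simpa [smul_eq_mul] using this
    have hl3 : LocallyIntegrable (fun t => F t * (((n:ℝ)+1) * F t ^ n * f t)) volume := by
      have := hl.continuous_smul (g := F) hc
      simpa [smul_eq_mul] using this
    have := wa_ibp volume hf hl hF' ih c x
    have e : ∀ t, ((n+1:ℕ) + 1 : ℝ) * F t ^ (n+1) * f t = 
        F t * (((n:ℝ)+1) * F t ^ n * f t) + f t * F t ^ (n+1) := by
      intro t; push_cast; ring
    simp_rw [e]
    rw [intervalIntegral.integral_add (wa_intervalIntegrable hl3 _ _)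
      (by simpa [mul_comm] using wa_intervalIntegrable hl2 c x), ← this]
    ring

theorem wa_measurable {μ : Measure ℝ} [IsLocallyFiniteMeasure μ] {h : ℝ → ℂ}
    (hh : LocallyIntegrable h μ) : StronglyMeasurable fun x => ∫ t in (0:ℝ)..x, h t ∂μ := by
  have hm := hh.aestronglyMeasurable
  have : (fun x => ∫ t in (0:ℝ)..x, h t ∂μ) = fun x => 
      (∫ t, (Ioc 0 x).indicator (hm.mk h) t ∂μ) - ∫ t, (Ioc x 0).indicator (hm.mk h) t ∂μ := by
    ext x
    rw [intervalIntegral, integral_indicator measurableSet_Ioc, integral_indicator measurableSet_Ioc]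
    congr 1 <;> exact integral_congr_ae (ae_restrict_of_ae hm.ae_eq_mk)
  rw [this]
  have hmm := hm.stronglyMeasurable_mk
  apply StronglyMeasurable.sub
  · apply StronglyMeasurable.integral_prod_right
      (f := fun x t => (Ioc 0 x).indicator (hm.mk h) t)
    have : (Function.uncurry fun x t => (Ioc 0 x).indicator (hm.mk h) t) = 
      {z : ℝ × ℝ | 0 < z.2 ∧ z.2 ≤ z.1}.indicator (fun z => hm.mk h z.2) := by
      ext ⟨x, t⟩; rfl
    rw [this]
    apply (hmm.comp_measurable measurable_snd).indicator
    exact (measurableSet_lt measurable_const measurable_snd).inter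
      (measurableSet_le measurable_snd measurable_fst)
  · apply StronglyMeasurable.integral_prod_right
      (f := fun x t => (Ioc x 0).indicator (hm.mk h) t)
    have : (Function.uncurry fun x t => (Ioc x 0).indicator (hm.mk h) t) = 
      {z : ℝ × ℝ | z.1 < z.2 ∧ z.2 ≤ 0}.indicator (fun z => hm.mk h z.2) := by
      ext ⟨x, t⟩; rfl
    rw [this]
    apply (hmm.comp_measurable measurable_snd).indicator
    exact (measurableSet_lt measurable_fst measurable_snd).inter
      (measurableSet_le measurable_snd measurable_const)

theorem wa_norm_le {μ : Measure ℝ} {h : ℝ → ℂ}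
    (hh : LocallyIntegrable h μ) {R x : ℝ} (hx : x ∈ Icc (-R) R) :
    ‖∫ t in (0:ℝ)..x, h t ∂μ‖ ≤ ∫ t in Ioc (-R) R, ‖h t‖ ∂μ := by
  have hR : 0 ≤ R := by linarith [hx.1, hx.2]
  refine (intervalIntegral.norm_integral_le_integral_norm_uIoc).trans ?_
  apply setIntegral_mono_set
  · exact ((hh.integrableOn_isCompact isCompact_Icc).mono_set Ioc_subset_Icc_self).norm
  · exact ae_of_all _ fun _ => norm_nonneg _
  · apply LE.le.eventuallyLE
    intro t ht
    rw [uIoc, mem_Ioc] at ht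
    refine ⟨lt_of_le_of_lt (le_inf (by linarith) hx.1) ht.1, ht.2.trans (sup_le hR hx.2)⟩

/-- if `v` is a primitive and `g` locally integrable, `v * g` is locally integrable. -/
theorem wa_mul_li {μ : Measure ℝ} [IsLocallyFiniteMeasure μ] {h v g : ℝ → ℂ} {B : ℂ}
    (hh : LocallyIntegrable h μ) (hv : ∀ x, v x = B + ∫ t in (0:ℝ)..x, h t ∂μ)
    (hg : LocallyIntegrable g volume) : LocallyIntegrable (fun t => v t * g t) volume := by
  have hvm : StronglyMeasurable v := by
    have : v = fun x => B + ∫ t in (0:ℝ)..x, h t ∂μ := funext hv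
    rw [this]; exact stronglyMeasurable_const.add (wa_measurable hh)
  rw [locallyIntegrable_iff]
  intro K hK
  obtain ⟨R, hR⟩ := hK.isBounded.subset_closedBall 0
  rw [Real.closedBall_eq_Icc] at hR
  have := hg.integrableOn_isCompact hK
  refine Integrable.bdd_mul (c := ‖B‖ + ∫ t in Ioc (-R) R, ‖h t‖ ∂μ) this
    hvm.aestronglyMeasurable ?_
  filter_upwards [ae_restrict_mem hK.measurableSet] with x hx
  rw [hv x]
  exact (norm_add_le _ _).trans (by gcongr; exact wa_norm_le hh (by simpa using hR hx))

end core


theorem wa_mul_cont {μ : Measure ℝ} {k u : ℝ → ℂ} 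
    (hk : LocallyIntegrable k μ) (hu : Continuous u) :
    LocallyIntegrable (fun t => k t * u t) μ := by
  have := hk.continuous_smul hu
  simpa [smul_eq_mul, mul_comm] using this

/-- Picard iterates -/
noncomputable def waU (μ : Measure ℝ) (g k : ℝ → ℂ) (A B : ℂ) : ℕ → ℝ → ℂ
  | 0 => fun x => A + ∫ t in (0:ℝ)..x, B * g t
  | n+1 => fun x => ∫ s in (0:ℝ)..x, (∫ t in (0:ℝ)..s, k t * waU μ g k A B n t ∂μ) * g s

theorem waU_cont {μ : Measure ℝ} [IsLocallyFiniteMeasure μ] {g k : ℝ → ℂ} {A B : ℂ} 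
    (hg : LocallyIntegrable g volume) (hk : LocallyIntegrable k μ) (n : ℕ) :
    Continuous (waU μ g k A B n) := by
  induction n with
  | zero => 
    have h1 : LocallyIntegrable (fun t => B * g t) volume := by
      simpa [mul_comm] using wa_mul_cont hg (continuous_const (y := B))
    exact continuous_const.add 
      (intervalIntegral.continuous_primitive (fun a b => wa_intervalIntegrable h1 a b) 0)
  | succ n ih =>
    have h1 := wa_mul_li (v := fun s => ∫ t in (0:ℝ)..s, k t * waU μ g k A B n t ∂μ)
      (B := 0) (wa_mul_cont hk ih) (by simp) hg
    exact (intervalIntegral.continuous_primitive (fun a b => wa_intervalIntegrable h1 a b) 0)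

theorem wa_V_bound {μ : Measure ℝ} [IsLocallyFiniteMeasure μ] {k u : ℝ → ℂ} 
    (hk : LocallyIntegrable k μ) (hu : Continuous u)
    {R : ℝ} {D : ℝ} {x : ℝ} (hx : x ∈ Icc (-R) R) (hD : 0 ≤ D) (h : ∀ t ∈ uIcc 0 x, ‖u t‖ ≤ D) :
    ‖∫ t in (0:ℝ)..x, k t * u t ∂μ‖ ≤ (∫ t in Ioc (-R) R, ‖k t‖ ∂μ) * D := by
  have hR : 0 ≤ R := by linarith [hx.1, hx.2]
  have hki : IntegrableOn k (Ioc (-R) R) μ := 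
    ((hk.integrableOn_isCompact isCompact_Icc).mono_set Ioc_subset_Icc_self)
  have hsub : uIoc 0 x ⊆ Ioc (-R) R := by
    intro t ht
    rw [uIoc, mem_Ioc] at ht
    exact ⟨lt_of_le_of_lt (le_inf (by linarith) hx.1) ht.1, ht.2.trans (sup_le hR hx.2)⟩
  refine (intervalIntegral.norm_integral_le_integral_norm_uIoc).trans ?_
  calc ∫ t in uIoc 0 x, ‖k t * u t‖ ∂μ ≤ ∫ t in uIoc 0 x, ‖k t‖ * D ∂μ := by
        apply setIntegral_mono_on
        · exact (((wa_mul_cont hk hu).integrableOn_isCompact isCompact_Icc).mono_set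
            (hsub.trans Ioc_subset_Icc_self)).norm
        · exact (hki.mono_set hsub).norm.mul_const _
        · exact measurableSet_uIoc
        · intro t ht
          rw [norm_mul]
          gcongr
          exact h t (uIoc_subset_uIcc ht)
    _ = (∫ t in uIoc 0 x, ‖k t‖ ∂μ) * D := integral_mul_const _ _
    _ ≤ _ := by
      refine mul_le_mul_of_nonneg_right ?_ hD
      apply setIntegral_mono_set hki.norm (ae_of_all _ fun _ => norm_nonneg _)
      exact LE.le.eventuallyLE hsub

theorem wa_absF_mono {f : ℝ → ℝ} (hf : LocallyIntegrable f volume) (h0 : ∀ t, 0 ≤ f t) {t x : ℝ}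
    (ht : t ∈ uIcc 0 x) : |∫ s in (0:ℝ)..t, f s| ≤ |∫ s in (0:ℝ)..x, f s| := by
  have := intervalIntegral.abs_integral_mono_interval (μ := volume) (f := f)
    (a := 0) (b := t) (c := 0) (d := x) ?_ (ae_of_all _ h0) (wa_intervalIntegrable hf _ _)
  · exact this
  · apply uIoc_subset_uIoc_of_uIcc_subset_uIcc
    exact uIcc_subset_uIcc_left ht

theorem wa_pow_abs {f F : ℝ → ℝ} (hf : LocallyIntegrable f volume) (h0 : ∀ t, 0 ≤ f t)
    (hF : ∀ x, F x = ∫ t in (0:ℝ)..x, f t) (n : ℕ) (x : ℝ) :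
    |∫ t in (0:ℝ)..x, |F t| ^ n * f t| = |F x| ^ (n+1) / (n+1) := by
  have h := wa_pow hf hF n 0 x
  have hF0 : F 0 = 0 := by rw [hF]; simp
  rw [hF0] at h
  have e : |∫ t in (0:ℝ)..x, |F t| ^ n * f t| = |∫ t in (0:ℝ)..x, F t ^ n * f t| := by
    rcases le_total 0 x with hx | hx
    · congr 1
      apply intervalIntegral.integral_congr
      intro t ht
      rw [uIcc_of_le hx] at ht
      have : 0 ≤ F t := by rw [hF]; exact intervalIntegral.integral_nonneg ht.1 fun _ _ => h0 _
      simp only [abs_of_nonneg this]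
    · have : ∫ t in (0:ℝ)..x, |F t| ^ n * f t = (-1)^n * ∫ t in (0:ℝ)..x, F t ^ n * f t := by
        rw [← intervalIntegral.integral_const_mul]
        apply intervalIntegral.integral_congr
        intro t ht
        rw [uIcc_of_ge hx] at ht
        have : F t ≤ 0 := by 
          rw [hF, intervalIntegral.integral_symm]
          have := intervalIntegral.integral_nonneg (μ := volume) ht.2 fun s _ => h0 s
          linarith
        simp only [abs_of_nonpos this]
        rw [neg_pow]; ring
      rw [this, abs_mul]; simp
  have h2 : (∫ t in (0:ℝ)..x, ((n:ℝ)+1) * F t ^ n * f t) = (n+1) * ∫ t in (0:ℝ)..x, F t ^ n * f t := by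
    rw [← intervalIntegral.integral_const_mul]; simp only [mul_assoc]
  rw [h2] at h
  rw [e, ← abs_pow, h]
  have : (0:ℝ) < n+1 := by positivity
  simp only [ne_eq, Nat.add_eq_zero_iff, one_ne_zero, and_false, not_false_eq_true, zero_pow, zero_add, abs_mul, abs_of_pos this]
  field_simp

theorem waU_bound {μ : Measure ℝ} [IsLocallyFiniteMeasure μ] {g k : ℝ → ℂ} {A B : ℂ} 
    (hg : LocallyIntegrable g volume) (hk : LocallyIntegrable k μ) {R C : ℝ} (hC0 : 0 ≤ C)
    (hC : ∀ x ∈ Icc (-R) R, ‖waU μ g k A B 0 x‖ ≤ C) (n : ℕ) : ∀ x ∈ Icc (-R) R, 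
    ‖waU μ g k A B n x‖ ≤ C * (∫ t in Ioc (-R) R, ‖k t‖ ∂μ) ^ n * 
      |∫ t in (0:ℝ)..x, ‖g t‖| ^ n / n.factorial := by
  set H := ∫ t in Ioc (-R) R, ‖k t‖ ∂μ with hH
  have hH0 : 0 ≤ H := integral_nonneg fun _ => norm_nonneg _
  have hgn : LocallyIntegrable (fun t => ‖g t‖) volume := fun x => (hg x).norm
  induction n with
  | zero => intro x hx; simpa using hC x hx
  | succ n ih =>
    intro x hx
    have hR : 0 ≤ R := by linarith [hx.1, hx.2]
    have hsub : uIcc 0 x ⊆ Icc (-R) R := by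
      rw [← uIcc_of_le (by linarith : -R ≤ R)]
      apply uIcc_subset_uIcc <;> rw [uIcc_of_le (by linarith : -R ≤ R)]
      · exact ⟨by linarith, hR⟩
      · exact hx
    set F : ℝ → ℝ := fun x => ∫ t in (0:ℝ)..x, ‖g t‖ with hF
    have hFc : Continuous F := 
      intervalIntegral.continuous_primitive (fun a b => wa_intervalIntegrable hgn a b) 0
    have key := wa_pow_abs (F := F) hgn (fun _ => norm_nonneg _) (fun _ => rfl) n x
    have hli : LocallyIntegrable (fun t => (H * (C * H ^ n / n.factorial)) * (|F t| ^ n * ‖g t‖)) volume := by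
      have := hgn.continuous_smul (g := fun t => (H * (C * H ^ n / n.factorial)) * |F t| ^ n) (by fun_prop)
      simpa [smul_eq_mul, mul_assoc] using this
    have step : ‖waU μ g k A B (n+1) x‖ ≤ 
        |∫ t in (0:ℝ)..x, (H * (C * H ^ n / n.factorial)) * (|F t| ^ n * ‖g t‖)| := by
      rw [waU]
      apply intervalIntegral.norm_integral_le_abs_of_norm_le
      · refine ae_restrict_of_forall_mem measurableSet_uIoc ?_
        intro t ht
        have ht' := uIoc_subset_uIcc ht
        rw [norm_mul]
        have := wa_V_bound (μ := μ) hk (waU_cont (A := A) (B := B) hg hk n) (R := R)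
          (D := C * H ^ n * |F t| ^ n / n.factorial) (hsub ht') (by positivity) (by
            intro s hs
            refine (ih s (hsub (uIcc_subset_uIcc_left ht' hs))).trans ?_
            have hmo := wa_absF_mono hgn (fun _ => norm_nonneg _) hs
            change |F s| ≤ |F t| at hmo
            change _ * |F s| ^ n / _ ≤ _
            gcongr)
        calc _ ≤ (H * (C * H ^ n * |F t| ^ n / n.factorial)) * ‖g t‖ := by gcongr
          _ = _ := by ring
      · exact wa_intervalIntegrable hli _ _
    refine step.trans (le_of_eq ?_)
    rw [intervalIntegral.integral_const_mul, abs_mul, key, abs_of_nonneg (by positivity)]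
    rw [Nat.factorial_succ]; push_cast
    have : (n.factorial : ℝ) ≠ 0 := by positivity
    change _ = C * H ^ (n + 1) * |F x| ^ (n + 1) / _
    field_simp
    ring

theorem wa_exists {μ : Measure ℝ} [IsLocallyFiniteMeasure μ] {g k : ℝ → ℂ} (A B : ℂ)
    (hg : LocallyIntegrable g volume) (hk : LocallyIntegrable k μ) : 
    ∃ u v : ℝ → ℂ, Continuous u ∧ (∀ x, u x = A + ∫ t in (0:ℝ)..x, v t * g t) ∧
      (∀ x, v x = B + ∫ t in (0:ℝ)..x, k t * u t ∂μ) := by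
  have hc := waU_cont (μ := μ) (g := g) (k := k) (A := A) (B := B) hg hk
  set U := waU μ g k A B with hU
  have hgn : LocallyIntegrable (fun t => ‖g t‖) volume := fun x => (hg x).norm
  set F : ℝ → ℝ := fun x => ∫ t in (0:ℝ)..x, ‖g t‖ with hF
  have hFc : Continuous F := 
      intervalIntegral.continuous_primitive (fun a b => wa_intervalIntegrable hgn a b) 0
  have hb : ∀ R : ℝ, ∃ b : ℕ → ℝ, Summable b ∧ (∀ n, 0 ≤ b n) ∧ 
      ∀ n, ∀ x ∈ Icc (-R) R, ‖U n x‖ ≤ b n := by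
    intro R
    obtain ⟨C, hC⟩ := (isCompact_Icc (a := -R) (b := R)).exists_bound_of_continuousOn (hc 0).continuousOn
    obtain ⟨L, hL⟩ := (isCompact_Icc (a := -R) (b := R)).exists_bound_of_continuousOn hFc.continuousOn
    set H := ∫ t in Ioc (-R) R, ‖k t‖ ∂μ with hH
    have hH0 : 0 ≤ H := integral_nonneg fun _ => norm_nonneg _
    refine ⟨fun n => |C| * ((H * |L|) ^ n / n.factorial), ?_, fun n => by positivity, ?_⟩
    · exact (Real.summable_pow_div_factorial _).mul_left _
    · intro n x hx
      refine (waU_bound hg hk (abs_nonneg C) (fun x hx => (hC x hx).trans (le_abs_self C)) n x hx).trans ?_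
      change |C| * H ^ n * |F x| ^ n / _ ≤ |C| * ((H * |L|) ^ n / n.factorial)
      rw [mul_pow, ← mul_div_assoc, ← mul_assoc]
      gcongr |C| * H ^ n * ?_ ^ n / _
      exact (hL x hx).trans (le_abs_self L)
  have hmem : ∀ x : ℝ, x ∈ Icc (-|x|) |x| := fun x => ⟨neg_abs_le x, le_abs_self x⟩
  have hsub : ∀ x : ℝ, uIoc 0 x ⊆ Icc (-|x|) |x| := by
    intro x t ht
    have := uIoc_subset_uIcc ht
    rw [mem_uIcc] at this
    rcases this with h | h
    · rw [abs_of_nonneg (h.1.trans h.2)]; constructor <;> linarith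
    · rw [abs_of_nonpos (h.1.trans h.2)]; constructor <;> linarith
  have hsum : ∀ x, HasSum (fun n => U n x) (∑' n, U n x) := by
    intro x
    obtain ⟨b, hbs, _, hbb⟩ := hb |x|
    exact (Summable.of_norm_bounded hbs (fun n => hbb n x (hmem x))).hasSum
  set u : ℝ → ℂ := fun x => ∑' n, U n x with hu
  have huc : Continuous u := by
    rw [continuous_iff_continuousAt]
    intro x
    obtain ⟨b, hbs, _, hbb⟩ := hb (|x|+1)
    have : ContinuousOn u (Icc (-(|x|+1)) (|x|+1)) :=
      continuousOn_tsum (fun n => (hc n).continuousOn) hbs hbb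
    refine this.continuousAt (Icc_mem_nhds ?_ ?_)
    · linarith [neg_abs_le x]
    · linarith [le_abs_self x]
  have hVsum : ∀ x, HasSum (fun n => ∫ t in (0:ℝ)..x, k t * U n t ∂μ) 
      (∫ t in (0:ℝ)..x, k t * u t ∂μ) := by
    intro x
    obtain ⟨b, hbs, hb0, hbb⟩ := hb |x|
    apply intervalIntegral.hasSum_integral_of_dominated_convergence (fun n t => ‖k t‖ * b n)
    · intro n
      exact (wa_mul_cont hk (hc n)).aestronglyMeasurable.restrict
    · intro n
      refine ae_of_all _ fun t ht => ?_
      rw [norm_mul]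
      gcongr
      exact hbb n t (hsub x ht)
    · exact ae_of_all _ fun t ht => hbs.mul_left _
    · simp_rw [tsum_mul_left]
      exact (wa_intervalIntegrable hk 0 x).norm.mul_const _
    · exact ae_of_all _ fun t ht => (hsum t).mul_left _
  have hku := wa_mul_cont hk huc
  set V : ℝ → ℂ := fun x => ∫ t in (0:ℝ)..x, k t * u t ∂μ with hV
  have hVg : LocallyIntegrable (fun t => V t * g t) volume := 
    wa_mul_li (B := 0) hku (by simp [hV]) hg
  have hBg : LocallyIntegrable (fun t => B * g t) volume := by
      simpa [mul_comm] using wa_mul_cont hg (continuous_const (y := B))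
  refine ⟨u, fun x => B + V x, huc, ?_, fun x => rfl⟩
  intro x
  have h1 : HasSum (fun n => U (n+1) x) (∫ t in (0:ℝ)..x, V t * g t) := by
    obtain ⟨b, hbs, hb0, hbb⟩ := hb |x|
    apply intervalIntegral.hasSum_integral_of_dominated_convergence 
      (F := fun n s => (∫ t in (0:ℝ)..s, k t * U n t ∂μ) * g s)
      (fun n t => ((∫ t in Ioc (-|x|) |x|, ‖k t‖ ∂μ) * b n) * ‖g t‖)
    · intro n
      exact (wa_mul_li (B := 0) (v := fun s => ∫ t in (0:ℝ)..s, k t * U n t ∂μ)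
        (wa_mul_cont hk (hc n)) (by simp) hg).aestronglyMeasurable.restrict
    · intro n
      refine ae_of_all _ fun t ht => ?_
      rw [norm_mul]
      gcongr
      apply wa_V_bound hk (hc n) (hsub x ht) (hb0 n)
      intro s hs
      apply hbb n s
      have h2 := uIcc_subset_uIcc_left (uIoc_subset_uIcc ht) hs
      rw [mem_uIcc] at h2
      rcases h2 with h | h
      · rw [abs_of_nonneg (h.1.trans h.2)]; constructor <;> linarith
      · rw [abs_of_nonpos (h.1.trans h.2)]; constructor <;> linarith
    · exact ae_of_all _ fun t ht => (hbs.mul_left _).mul_right _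
    · simp_rw [tsum_mul_right]
      exact (wa_intervalIntegrable hg 0 x).norm.const_mul _
    · exact ae_of_all _ fun t ht => (hVsum t).mul_right _
  have h2 : u x = U 0 x + ∫ t in (0:ℝ)..x, V t * g t := by
    have := (hasSum_nat_add_iff' 1).2 (hsum x)
    have := h1.unique this
    rw [this]; simp [hu]
  rw [h2]
  simp_rw [add_mul]
  rw [intervalIntegral.integral_add (wa_intervalIntegrable hBg _ _) (wa_intervalIntegrable hVg _ _),
    ← add_assoc]
  rfl

structure WSol (μ : Measure ℝ) (g : ℝ → ℂ) (r q : ℝ → ℝ) (z : ℂ) (u v : ℝ → ℂ) : Prop where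
  cont : Continuous u
  li : LocallyIntegrable (fun t => v t * g t) volume
  hu : ∀ c x, u x = u c + ∫ t in c..x, v t * g t
  hv : ∀ c x, v x = v c + ∫ t in c..x, ((q t : ℂ) - z * r t) * u t ∂μ

theorem wa_coef {μ : Measure ℝ} {r q : ℝ → ℝ} (hr : LocallyIntegrable r μ)
    (hq : LocallyIntegrable q μ) (z : ℂ) :
    LocallyIntegrable (fun t => (q t : ℂ) - z * r t) μ := by
  have h1 : LocallyIntegrable (fun t => (q t : ℂ)) μ := fun x => by
    obtain ⟨s, hs, hi⟩ := hq x
    exact ⟨s, hs, hi.ofReal⟩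
  have h2 : LocallyIntegrable (fun t => (r t : ℂ)) μ := fun x => by
    obtain ⟨s, hs, hi⟩ := hr x
    exact ⟨s, hs, hi.ofReal⟩
  have h3 : LocallyIntegrable (fun t => z * (r t : ℂ)) μ := by
    simpa [mul_comm] using wa_mul_cont h2 (continuous_const (y := z))
  exact h1.sub h3

theorem wa_wsol_exists {μ : Measure ℝ} [IsLocallyFiniteMeasure μ] {g : ℝ → ℂ} {r q : ℝ → ℝ}
    (hg : LocallyIntegrable g volume) (hr : LocallyIntegrable r μ)
    (hq : LocallyIntegrable q μ) (z A B : ℂ) : 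
    ∃ u v, WSol μ g r q z u v ∧ u 0 = A ∧ v 0 = B := by
  obtain ⟨u, v, hc, h1, h2⟩ := wa_exists (μ := μ) A B hg (wa_coef hr hq z)
  have hku := wa_mul_cont (wa_coef hr hq z) hc
  have hvg := wa_mul_li hku h2 hg
  exact ⟨u, v, ⟨hc, hvg, wa_from_zero hvg h1, wa_from_zero hku h2⟩, by simpa using h1 0,
    by simpa using h2 0⟩

theorem wa_lagrange {μ : Measure ℝ} [IsLocallyFiniteMeasure μ] {g : ℝ → ℂ} {r q : ℝ → ℝ}
    (hr : LocallyIntegrable r μ) (hq : LocallyIntegrable q μ) {z z' : ℂ} {u v f f1 : ℝ → ℂ}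
    (h : WSol μ g r q z u v) (h' : WSol μ g r q z' f f1) (c d : ℝ) :
    (u d * f1 d - v d * f d) = (u c * f1 c - v c * f c) +
      ∫ t in c..d, (z - z') * (r t * (u t * f t)) ∂μ := by
  have hk := wa_mul_cont (wa_coef hr hq z) h.cont
  have hk' := wa_mul_cont (wa_coef hr hq z') h'.cont
  have i1 := wa_ibp μ h.li hk' h.hu h'.hv c d
  have i2 := wa_ibp μ h'.li hk h'.hu h.hv c d
  have e : ∫ t in c..d, (z - z') * (r t * (u t * f t)) ∂μ = 
     (∫ t in c..d, u t * (((q t : ℂ) - z' * r t) * f t) ∂μ) - 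
     ∫ t in c..d, f t * (((q t : ℂ) - z * r t) * u t) ∂μ := by
    rw [← intervalIntegral.integral_sub]
    · congr 1; ext t; ring
    · simpa [mul_comm] using wa_intervalIntegrable (wa_mul_cont hk' h.cont) c d
    · simpa [mul_comm] using wa_intervalIntegrable (wa_mul_cont hk h'.cont) c d
  have e2 : (∫ t in c..d, v t * g t * f1 t) = ∫ t in c..d, f1 t * g t * v t := by
    congr 1; ext t; ring
  rw [e]
  rw [e2] at i1
  linear_combination i1 - i2

theorem wa_estimate {μ : Measure ℝ} [IsLocallyFiniteMeasure μ] {g : ℝ → ℂ} {r q : ℝ → ℝ}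
    (hr : LocallyIntegrable r μ) (hq : LocallyIntegrable q μ) {z z0 : ℂ} {u v f f1 p p1 : ℝ → ℂ}
    (h : WSol μ g r q z u v) (hf : WSol μ g r q z0 f f1) (hp : WSol μ g r q z0 p p1)
    (hW : ∀ x, f x * p1 x - f1 x * p x = 1) (c0 : ℝ) (J : Set ℝ)
    (hJ : IntegrableOn (fun t => (‖f t‖ + ‖p t‖) ^ 2 * |r t|) J μ)
    (hs : ‖z - z0‖ * ∫ t in J, (‖f t‖ + ‖p t‖) ^ 2 * |r t| ∂μ ≤ 1/4) :
    ∃ M : ℝ, 0 ≤ M ∧ ∀ x, uIoc c0 x ⊆ J → ‖u x‖ ≤ M * (‖f x‖ + ‖p x‖) := by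
  set w : ℝ → ℝ := fun t => (‖f t‖ + ‖p t‖) ^ 2 * |r t| with hw
  have hw0 : ∀ t, 0 ≤ w t := fun t => by positivity
  set α : ℝ → ℂ := fun x => u x * p1 x - v x * p x with hα
  set β : ℝ → ℂ := fun x => u x * f1 x - v x * f x with hβ
  have hα' : ∀ x, α x = α c0 + ∫ t in c0..x, (z - z0) * (r t * (u t * p t)) ∂μ :=
    wa_lagrange hr hq h hp c0
  have hβ' : ∀ x, β x = β c0 + ∫ t in c0..x, (z - z0) * (r t * (u t * f t)) ∂μ :=
    wa_lagrange hr hq h hf c0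
  have hrep : ∀ x, u x = α x * f x - β x * p x := by
    intro x
    simp only [hα, hβ]
    linear_combination (-u x) * hW x
  set N : ℝ → ℝ := fun x => ‖α x‖ + ‖β x‖ with hN
  have hN0 : ∀ x, 0 ≤ N x := fun x => by positivity
  have huN : ∀ x, ‖u x‖ ≤ N x * (‖f x‖ + ‖p x‖) := by
    intro x
    rw [hrep x]
    refine (norm_sub_le _ _).trans ?_
    rw [norm_mul, norm_mul]
    have a1 := norm_nonneg (α x); have a2 := norm_nonneg (β x)
    have a3 := norm_nonneg (f x); have a4 := norm_nonneg (p x)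
    simp only [hN]
    nlinarith [mul_nonneg a1 a4, mul_nonneg a2 a3]
  refine ⟨2 * N c0, by linarith [hN0 c0], fun y hy => (huN y).trans ?_⟩
  gcongr
  -- bound N y
  have hr' : LocallyIntegrable (fun t => (r t : ℂ)) μ := fun x => by
    obtain ⟨s, hs, hi⟩ := hr x
    exact ⟨s, hs, hi.ofReal⟩
  have hli : ∀ k : ℝ → ℂ, Continuous k → 
      LocallyIntegrable (fun t => (z - z0) * (r t * (u t * k t))) μ := by
    intro k hk
    have := wa_mul_cont hr' (u := fun t => (z - z0) * (u t * k t)) 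
      (continuous_const.mul (h.cont.mul hk))
    refine this.congr (ae_of_all _ fun t => ?_)
    simp only; ring
  have hbd : ∃ S, ∀ x ∈ uIcc c0 y, N x ≤ S := by
    refine ⟨(‖α c0‖ + ∫ t in uIoc c0 y, ‖(z - z0) * (r t * (u t * p t))‖ ∂μ) + 
      (‖β c0‖ + ∫ t in uIoc c0 y, ‖(z - z0) * (r t * (u t * f t))‖ ∂μ), ?_⟩
    intro x hx
    have sub : uIoc c0 x ⊆ uIoc c0 y := 
      uIoc_subset_uIoc_of_uIcc_subset_uIcc (uIcc_subset_uIcc_left hx)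
    have gen : ∀ k : ℝ → ℂ, Continuous k → ‖∫ t in c0..x, (z - z0) * (r t * (u t * k t)) ∂μ‖ ≤ 
        ∫ t in uIoc c0 y, ‖(z - z0) * (r t * (u t * k t))‖ ∂μ := by
      intro k hk
      refine intervalIntegral.norm_integral_le_integral_norm_uIoc.trans ?_
      apply setIntegral_mono_set _ (ae_of_all _ fun _ => norm_nonneg _) (LE.le.eventuallyLE sub)
      exact (((hli k hk).integrableOn_isCompact isCompact_uIcc).mono_set uIoc_subset_uIcc).norm
    simp only [hN]
    rw [hα' x, hβ' x]
    exact add_le_add ((norm_add_le _ _).trans (by gcongr; exact gen p hp.cont))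
      ((norm_add_le _ _).trans (by gcongr; exact gen f hf.cont))
  have hstep : ∀ S, (∀ x ∈ uIcc c0 y, N x ≤ S) → ∀ x ∈ uIcc c0 y, N x ≤ N c0 + S / 2 := by
    intro S hS x hx
    have hS0 : 0 ≤ S := (hN0 x).trans (hS x hx)
    have subc : uIcc c0 x ⊆ uIcc c0 y := uIcc_subset_uIcc_left hx
    have sub : uIoc c0 x ⊆ uIoc c0 y := uIoc_subset_uIoc_of_uIcc_subset_uIcc subc
    have subJ := sub.trans hy
    have gen : ∀ k : ℝ → ℂ, Continuous k → (∀ t, ‖k t‖ ≤ ‖f t‖ + ‖p t‖) → 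
        ‖∫ t in c0..x, (z - z0) * (r t * (u t * k t)) ∂μ‖ ≤ S / 4 := by
      intro k hk hk2
      rw [intervalIntegral.integral_const_mul, norm_mul]
      have : ‖∫ t in c0..x, (r t * (u t * k t)) ∂μ‖ ≤ S * ∫ t in J, w t ∂μ := by
        refine intervalIntegral.norm_integral_le_integral_norm_uIoc.trans ?_
        calc ∫ t in uIoc c0 x, ‖(r t * (u t * k t))‖ ∂μ ≤ ∫ t in uIoc c0 x, S * w t ∂μ := by
              apply setIntegral_mono_on
              · exact ((((wa_mul_cont hr' (h.cont.mul hk))).integrableOn_isCompact 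
                  isCompact_uIcc).mono_set uIoc_subset_uIcc).norm
              · exact (hJ.mono_set subJ).const_mul _
              · exact measurableSet_uIoc
              · intro t ht
                rw [norm_mul, norm_mul, Complex.norm_real, Real.norm_eq_abs]
                have h1 : ‖u t‖ ≤ S * (‖f t‖ + ‖p t‖) := by
                  refine (huN t).trans ?_
                  gcongr
                  exact hS t (subc (uIoc_subset_uIcc ht))
                calc |r t| * (‖u t‖ * ‖k t‖) ≤ |r t| * ((S * (‖f t‖ + ‖p t‖)) * (‖f t‖ + ‖p t‖)) := by
                      gcongr; exact hk2 t
                  _ = S * w t := by simp only [hw]; ring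
          _ = S * ∫ t in uIoc c0 x, w t ∂μ := integral_const_mul _ _
          _ ≤ _ := by
            refine mul_le_mul_of_nonneg_left ?_ hS0
            exact setIntegral_mono_set hJ (ae_of_all _ hw0) (LE.le.eventuallyLE subJ)
      calc _ ≤ ‖z - z0‖ * (S * ∫ t in J, w t ∂μ) := by gcongr
        _ = S * (‖z - z0‖ * ∫ t in J, w t ∂μ) := by ring
        _ ≤ S * (1/4) := by gcongr
        _ = S / 4 := by ring
    have g1 := gen p hp.cont (fun t => by linarith [norm_nonneg (f t)])
    have g2 := gen f hf.cont (fun t => by linarith [norm_nonneg (p t)])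
    simp only [hN]
    rw [hα' x, hβ' x]
    have n1 := norm_add_le (α c0) (∫ t in c0..x, (z - z0) * (r t * (u t * p t)) ∂μ)
    have n2 := norm_add_le (β c0) (∫ t in c0..x, (z - z0) * (r t * (u t * f t)) ∂μ)
    linarith
  obtain ⟨S0, hS0⟩ := hbd
  have hne : (N '' uIcc c0 y).Nonempty := ⟨_, mem_image_of_mem N left_mem_uIcc⟩
  have hba : BddAbove (N '' uIcc c0 y) := ⟨S0, by rintro _ ⟨x, hx, rfl⟩; exact hS0 x hx⟩
  set S := sSup (N '' uIcc c0 y) with hS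
  have hS1 : ∀ x ∈ uIcc c0 y, N x ≤ S := fun x hx => le_csSup hba (mem_image_of_mem N hx)
  have hS2 : S ≤ N c0 + S / 2 := csSup_le hne (by rintro _ ⟨x, hx, rfl⟩; exact hstep S hS1 x hx)
  have := hS1 y right_mem_uIcc
  linarith

theorem wa_l2_iff {μ : Measure ℝ} {r : ℝ → ℝ} (hr : LocallyIntegrable r μ) 
    (hrpos : ∀ᵐ t ∂μ, 0 < r t) {u : ℝ → ℂ} (hu : Continuous u) (J : Set ℝ) :
    ∫⁻ t in J, sqWeight r u t ∂μ < ∞ ↔ IntegrableOn (fun t => ‖u t‖ ^ 2 * |r t|) J μ := by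
  have hm : AEStronglyMeasurable (fun t => ‖u t‖ ^ 2 * |r t|) (μ.restrict J) := by
    apply AEStronglyMeasurable.restrict
    exact ((hu.norm.pow 2).aestronglyMeasurable).mul 
      (by simpa using hr.aestronglyMeasurable.norm)
  have e : ∫⁻ t in J, sqWeight r u t ∂μ = ∫⁻ t in J, ‖‖u t‖ ^ 2 * |r t|‖ₑ ∂μ := by
    apply lintegral_congr_ae
    apply ae_restrict_of_ae
    filter_upwards [hrpos] with t ht
    rw [abs_of_pos ht, sqWeight, enorm_mul, enorm_pow, enorm_norm, Real.enorm_eq_ofReal ht.le]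
    rfl
  rw [IntegrableOn, Integrable, hasFiniteIntegral_iff_enorm, e]
  simp [hm]

theorem wa_core {μ : Measure ℝ} [IsLocallyFiniteMeasure μ] {g : ℝ → ℂ} {r q : ℝ → ℝ}
    (hg : LocallyIntegrable g volume)
    (hr : LocallyIntegrable r μ) (hrpos : ∀ᵐ t ∂μ, 0 < r t)
    (hq : LocallyIntegrable q μ) {z0 : ℂ} (J : ℝ → Set ℝ) 
    (hJm : ∀ c, MeasurableSet (J c)) (hJ0 : ∀ w : ℝ → ℝ, ∀ c, (∀ t, 0 ≤ w t) → 
      IntegrableOn w (J c) μ → ∀ ε > 0, 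
      ∃ c' x0, IntegrableOn w (J c') μ ∧ ∫ t in J c', w t ∂μ ≤ ε ∧ (∀ x ∈ J c', uIoc x0 x ⊆ J c'))
    (hJc : ∀ c c', ∃ K, IsCompact K ∧ J c ⊆ J c' ∪ K)
    (h0 : ∀ u v, WSol μ g r q z0 u v → ∀ c, ∫⁻ t in J c, sqWeight r u t ∂μ < ∞)
    {z : ℂ} {u v : ℝ → ℂ} (h : WSol μ g r q z u v) (c : ℝ) : 
    ∫⁻ t in J c, sqWeight r u t ∂μ < ∞ := by
  obtain ⟨f, f1, hf, hf0, hf10⟩ := wa_wsol_exists hg hr hq z0 1 0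
  obtain ⟨p, p1, hp, hp0, hp10⟩ := wa_wsol_exists hg hr hq z0 0 1
  have hW : ∀ x, f x * p1 x - f1 x * p x = 1 := by
    intro x
    rw [wa_lagrange hr hq hf hp 0 x]
    simp [hf0, hf10, hp0, hp10]
  have habs : ∀ k : ℝ → ℝ, Continuous k → LocallyIntegrable (fun t => k t * |r t|) μ := by
    intro k hk
    have : LocallyIntegrable (fun t => |r t|) μ := fun x => (hr x).norm
    simpa [smul_eq_mul] using this.continuous_smul hk
  set w : ℝ → ℝ := fun t => (‖f t‖ + ‖p t‖) ^ 2 * |r t| with hw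
  have hw0 : ∀ t, 0 ≤ w t := fun t => by positivity
  have hwl : LocallyIntegrable w μ := 
    habs (fun t => (‖f t‖ + ‖p t‖) ^ 2) ((hf.cont.norm.add hp.cont.norm).pow 2)
  have hwi : IntegrableOn w (J c) μ := by
    have a := (wa_l2_iff hr hrpos hf.cont _).1 (h0 f f1 hf c)
    have b := (wa_l2_iff hr hrpos hp.cont _).1 (h0 p p1 hp c)
    refine ((a.add b).const_mul 2).mono' hwl.aestronglyMeasurable.restrict (ae_of_all _ fun t => ?_)
    rw [Real.norm_of_nonneg (hw0 t)]
    simp only [hw, Pi.add_apply]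
    have := abs_nonneg (r t)
    nlinarith [mul_nonneg (sq_nonneg (‖f t‖ - ‖p t‖)) this]
  obtain ⟨c', x0, i1, i2, i3⟩ := hJ0 w c hw0 hwi (1 / (4 * (‖z - z0‖ + 1))) (by positivity)
  obtain ⟨M, hM0, hM⟩ := wa_estimate hr hq h hf hp hW x0 (J c') i1 (by
    calc _ ≤ (‖z - z0‖ + 1) * (1 / (4 * (‖z - z0‖ + 1))) := by
          apply mul_le_mul (by linarith) i2 (integral_nonneg hw0) (by positivity)
      _ = _ := by field_simp)
  obtain ⟨K, hK, hsub⟩ := hJc c c'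
  rw [wa_l2_iff hr hrpos h.cont]
  have hul : LocallyIntegrable (fun t => ‖u t‖ ^ 2 * |r t|) μ := 
    habs (fun t => ‖u t‖ ^ 2) (h.cont.norm.pow 2)
  refine IntegrableOn.mono_set (IntegrableOn.union ?_ (hul.integrableOn_isCompact hK)) hsub
  refine (i1.const_mul (M ^ 2)).mono' hul.aestronglyMeasurable.restrict ?_
  filter_upwards [ae_restrict_mem (hJm c')] with t ht
  rw [Real.norm_of_nonneg (by positivity)]
  have := hM t (i3 t ht)
  calc ‖u t‖ ^ 2 * |r t| ≤ (M * (‖f t‖ + ‖p t‖)) ^ 2 * |r t| := by gcongr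
    _ = _ := by simp only [hw]; ring

theorem wa_tail_left {μ : Measure ℝ} (w : ℝ → ℝ) (c : ℝ)
    (hi : IntegrableOn w (Iic c) μ) (ε : ℝ) (hε : 0 < ε) : 
    ∃ c' ≤ c, ∫ t in Iic c', w t ∂μ ≤ ε := by
  have h := tendsto_setIntegral_of_antitone (μ := μ) (s := fun n : ℕ => Iic (c - n)) (f := w)
    (fun n => measurableSet_Iic) (fun m n hmn => Iic_subset_Iic.2 (by
      have : (m:ℝ) ≤ n := by exact_mod_cast hmn
      linarith)) ⟨0, by simpa using hi⟩
  have e : ⋂ n : ℕ, Iic (c - n) = ∅ := by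
    ext x; simp only [mem_iInter, mem_Iic, mem_empty_iff_false, iff_false, not_forall, not_le]
    obtain ⟨n, hn⟩ := exists_nat_gt (c - x)
    exact ⟨n, by linarith⟩
  rw [e] at h
  simp only [Measure.restrict_empty, integral_zero_measure] at h
  obtain ⟨n, hn⟩ := (h.eventually (gt_mem_nhds hε)).exists
  exact ⟨c - n, by linarith [Nat.cast_nonneg (α := ℝ) n], hn.le⟩

theorem wa_tail_right {μ : Measure ℝ} (w : ℝ → ℝ) (c : ℝ)
    (hi : IntegrableOn w (Ioi c) μ) (ε : ℝ) (hε : 0 < ε) : 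
    ∃ c' ≥ c, ∫ t in Ioi c', w t ∂μ ≤ ε := by
  have h := tendsto_setIntegral_of_antitone (μ := μ) (s := fun n : ℕ => Ioi (c + n)) (f := w)
    (fun n => measurableSet_Ioi) (fun m n hmn => Ioi_subset_Ioi (by
      have : (m:ℝ) ≤ n := by exact_mod_cast hmn
      linarith)) ⟨0, by simpa using hi⟩
  have e : ⋂ n : ℕ, Ioi (c + n) = ∅ := by
    ext x; simp only [mem_iInter, mem_Ioi, mem_empty_iff_false, iff_false, not_forall, not_lt]
    obtain ⟨n, hn⟩ := exists_nat_gt (x - c)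
    exact ⟨n, by linarith⟩
  rw [e] at h
  simp only [Measure.restrict_empty, integral_zero_measure] at h
  obtain ⟨n, hn⟩ := (h.eventually (gt_mem_nhds hε)).exists
  exact ⟨c + n, by linarith [Nat.cast_nonneg (α := ℝ) n], hn.le⟩

theorem wa_left {μ : Measure ℝ} [IsLocallyFiniteMeasure μ] {g : ℝ → ℂ} {r q : ℝ → ℝ}
    (hg : LocallyIntegrable g volume)
    (hr : LocallyIntegrable r μ) (hrpos : ∀ᵐ t ∂μ, 0 < r t)
    (hq : LocallyIntegrable q μ) {z0 : ℂ} 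
    (h0 : ∀ u v, WSol μ g r q z0 u v → ∀ c, ∫⁻ t in Iic c, sqWeight r u t ∂μ < ∞)
    {z : ℂ} {u v : ℝ → ℂ} (h : WSol μ g r q z u v) (c : ℝ) : 
    ∫⁻ t in Iic c, sqWeight r u t ∂μ < ∞ := by
  refine wa_core hg hr hrpos hq (fun c => Iic c) (fun _ => measurableSet_Iic) ?_ ?_ h0 h c
  · intro w c _ hi ε hε
    obtain ⟨c', h1, h2⟩ := wa_tail_left w c hi ε hε
    refine ⟨c', c', hi.mono_set (Iic_subset_Iic.2 h1), h2, ?_⟩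
    intro x hx
    rw [uIoc_of_ge hx]; exact fun t ht => ht.2
  · intro c c'
    refine ⟨Icc c' c, isCompact_Icc, fun t ht => ?_⟩
    rcases le_total t c' with h | h
    · exact Or.inl h
    · exact Or.inr ⟨h, ht⟩

theorem wa_right {μ : Measure ℝ} [IsLocallyFiniteMeasure μ] {g : ℝ → ℂ} {r q : ℝ → ℝ}
    (hg : LocallyIntegrable g volume)
    (hr : LocallyIntegrable r μ) (hrpos : ∀ᵐ t ∂μ, 0 < r t)
    (hq : LocallyIntegrable q μ) {z0 : ℂ} 
    (h0 : ∀ u v, WSol μ g r q z0 u v → ∀ c, ∫⁻ t in Ioi c, sqWeight r u t ∂μ < ∞)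
    {z : ℂ} {u v : ℝ → ℂ} (h : WSol μ g r q z u v) (c : ℝ) : 
    ∫⁻ t in Ioi c, sqWeight r u t ∂μ < ∞ := by
  refine wa_core hg hr hrpos hq (fun c => Ioi c) (fun _ => measurableSet_Ioi) ?_ ?_ h0 h c
  · intro w c _ hi ε hε
    obtain ⟨c', h1, h2⟩ := wa_tail_right w c hi ε hε
    refine ⟨c', c', hi.mono_set (Ioi_subset_Ioi h1), h2, ?_⟩
    intro x hx
    rw [uIoc_of_le (le_of_lt hx)]; exact fun t ht => ht.1
  · intro c c'
    refine ⟨Icc c c', isCompact_Icc, fun t ht => ?_⟩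
    rcases lt_or_ge c' t with h | h
    · exact Or.inl h
    · exact Or.inr ⟨le_of_lt ht, h⟩

theorem wa_cont_junk {u f : ℝ → ℂ} (h : ∀ c x, c ≤ x → u x = u c + ∫ t in c..x, f t) :
    Continuous u := by
  by_cases hf : LocallyIntegrable f volume
  · apply wa_continuous hf
    intro c x
    rcases le_total c x with hcx | hcx
    · exact h c x hcx
    · rw [intervalIntegral.integral_symm, h x c hcx]; ring
  · rw [LocallyIntegrable] at hf
    push Not at hf
    obtain ⟨y, hy⟩ := hf
    have h1 : ∀ c x, c < y → y < x → u x = u c := by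
      intro c x hc hx
      rw [h c x (hc.le.trans hx.le), intervalIntegral.integral_undef, add_zero]
      intro hi
      exact hy ⟨Ioc c x, Ioc_mem_nhds hc hx, hi.1⟩
    have hl : ∀ c, c < y → u c = u (y+1) := fun c hc => (h1 c (y+1) hc (by linarith)).symm
    have hr : ∀ x, y < x → u x = u (y+1) := fun x hx => by
      rw [h1 (y-1) x (by linarith) hx, hl _ (by linarith)]
    have hyy : u y = u (y+1) := by
      by_cases hi : IntegrableOn f (Icc (y-1) y) volume
      · have hc : ContinuousOn u (Icc (y-1) y) := by
          have : ContinuousOn (fun x => u (y-1) + ∫ t in (y-1)..x, f t) (Icc (y-1) y) := by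
            apply continuousOn_const.add
            have := intervalIntegral.continuousOn_primitive_interval (μ := volume) (f := f) 
              (a := y-1) (b := y) (by rwa [uIcc_of_le (by linarith)])
            rwa [uIcc_of_le (by linarith)] at this
          refine this.congr fun x hx => h _ _ hx.1
        have e : EqOn u (fun _ => u (y+1)) (Ico (y-1) y) := fun x hx => hl x hx.2
        have := e.of_subset_closure hc continuousOn_const Ico_subset_Icc_self
          (by rw [closure_Ico (by linarith)])
        exact this ⟨by linarith, le_rfl⟩
      · rw [h (y-1) y (by linarith), intervalIntegral.integral_undef, add_zero, hl _ (by linarith)]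
        intro hi'
        apply hi
        rw [integrableOn_Icc_iff_integrableOn_Ioc]
        exact hi'.1
    have : u = fun _ => u (y+1) := by
      ext x
      rcases lt_trichotomy x y with hx | rfl | hx
      · exact hl x hx
      · exact hyy
      · exact hr x hx
    rw [this]; exact continuous_const

theorem wa_sol_iff {T : Set ℝ} {μ : Measure ℝ} [IsLocallyFiniteMeasure μ] {p r q : ℝ → ℝ}
    (hg : LocallyIntegrable (fun t => 1 / extK T (cR p) t) volume)
    (hr : LocallyIntegrable r μ) (hq : LocallyIntegrable q μ) (z : ℂ) (u v : ℝ → ℂ) :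
    IsSLSol T μ (cR p) (cR r) (cR q) z 0 u v ↔ 
      WSol μ (fun t => 1 / extK T (cR p) t) r q z u v := by
  have e : ∀ t, v t / extK T (cR p) t = v t * (1 / extK T (cR p) t) := fun t => by ring
  constructor
  · intro h
    have hc : Continuous u := wa_cont_junk fun c x hcx => (h c x hcx).1
    have hku := wa_mul_cont (wa_coef hr hq z) hc
    have hv : ∀ c x, v x = v c + ∫ t in c..x, ((q t : ℂ) - z * r t) * u t ∂μ := by
      have : ∀ c x, c ≤ x → v x = v c + ∫ t in c..x, ((q t : ℂ) - z * r t) * u t ∂μ := by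
        intro c x hcx
        rw [intervalIntegral.integral_of_le hcx]
        simpa [cR] using (h c x hcx).2
      intro c x
      rcases le_total c x with hcx | hcx
      · exact this c x hcx
      · rw [intervalIntegral.integral_symm, this x c hcx]; ring
    refine ⟨hc, wa_mul_li hku (hv 0) hg, ?_, hv⟩
    intro c x
    rcases le_total c x with hcx | hcx
    · simpa only [e] using (h c x hcx).1
    · rw [intervalIntegral.integral_symm]; simp only [← e]; rw [(h x c hcx).1]; ring
  · intro h c x hcx
    constructor
    · simpa only [e] using h.hu c x
    · rw [h.hv c x, intervalIntegral.integral_of_le hcx]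
      simp [cR]

/-- the map with `p̄ = p ∘ τ` -/
noncomputable def waTau (T : Set ℝ) (t : ℝ) : ℝ :=
  if t ∈ tsKappa T then t else tsSigma (tsKappa T) t

theorem wa_extK (T : Set ℝ) (p : ℝ → ℂ) (t : ℝ) : extK T p t = p (waTau T t) := by
  unfold extK waTau; split_ifs <;> rfl

theorem wa_kappa_sub (T : Set ℝ) : tsKappa T ⊆ T := by
  unfold tsKappa; split_ifs
  · exact diff_subset
  · exact subset_rfl

theorem wa_mem_kappa {T : Set ℝ} {s : ℝ} (hs : s ∈ T) (h : ∃ s' ∈ T, s' < s) : s ∈ tsKappa T := by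
  unfold tsKappa; split_ifs with hc
  · refine ⟨hs, ?_⟩
    rintro rfl
    obtain ⟨s', h1, h2⟩ := h
    exact absurd (csInf_le hc.1 h1) (not_le.2 h2)
  · exact hs

theorem wa_kappa_closed {T : Set ℝ} (hne : T.Nonempty) (hcl : IsClosed T) : IsClosed (tsKappa T) := by
  unfold tsKappa; split_ifs with hc
  · have : T \ {sInf T} = T ∩ Ici (tsSigma T (sInf T)) := by
      ext s
      simp only [mem_diff, mem_singleton_iff, mem_inter_iff, mem_Ici]
      refine and_congr_right fun hs => ⟨fun h => ?_, fun h => ?_⟩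
      · have hlt : sInf T < s := lt_of_le_of_ne (csInf_le hc.1 hs) (Ne.symm h)
        unfold tsSigma
        rw [if_pos ⟨s, hs, hlt⟩]
        exact csInf_le ⟨sInf T, fun x hx => hx.2.le⟩ ⟨hs, hlt⟩
      · exact (lt_of_lt_of_le hc.2 h).ne'
    rw [this]
    exact hcl.inter isClosed_Ici
  · exact hcl

theorem wa_null {T : Set ℝ} (hne : T.Nonempty) (hcl : IsClosed T) {μ : Measure ℝ} 
    (hμ : ∀ c d : ℝ, c ≤ d →
      μ (Set.Ioc c d) = ENNReal.ofReal (tsSigma (tsKappa T) d - tsSigma (tsKappa T) c)) :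
    μ (tsKappa T)ᶜ = 0 := by
  apply measure_null_of_locally_null
  intro x hx
  have ho := (wa_kappa_closed hne hcl).isOpen_compl
  obtain ⟨ε, hε, hb⟩ := Metric.isOpen_iff.1 ho x hx
  rw [Real.ball_eq_Ioo] at hb
  refine ⟨Ioc (x - ε/2) (x + ε/2), mem_nhdsWithin_of_mem_nhds (Ioc_mem_nhds (by linarith) (by linarith)), ?_⟩
  rw [hμ _ _ (by linarith)]
  have : {s | s ∈ tsKappa T ∧ x + ε/2 < s} = {s | s ∈ tsKappa T ∧ x - ε/2 < s} := by
    ext s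
    refine and_congr_right fun hs => ⟨fun h => by linarith, fun h => ?_⟩
    by_contra hcon
    push Not at hcon
    exact hb (a := s) ⟨by linarith, by linarith⟩ hs
  unfold tsSigma
  rw [this]; simp

theorem wa_locfin {T : Set ℝ} {μ : Measure ℝ} 
    (hμ : ∀ c d : ℝ, c ≤ d →
      μ (Set.Ioc c d) = ENNReal.ofReal (tsSigma (tsKappa T) d - tsSigma (tsKappa T) c)) :
    IsLocallyFiniteMeasure μ := by
  refine ⟨fun x => ⟨Ioc (x-1) (x+1), Ioc_mem_nhds (by linarith) (by linarith), ?_⟩⟩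
  rw [hμ _ _ (by linarith)]; exact ENNReal.ofReal_lt_top

/-- interior hull -/
def waI (T : Set ℝ) : Set ℝ := {t | (∃ s ∈ T, s < t) ∧ ∃ s ∈ T, t ≤ s}

theorem waI_meas (T : Set ℝ) : MeasurableSet (waI T) := by
  apply OrdConnected.measurableSet
  refine ⟨fun x hx y hy t ht => ?_⟩
  obtain ⟨⟨s, hs, hsx⟩, _⟩ := hx
  obtain ⟨_, ⟨s', hs', hsy⟩⟩ := hy
  exact ⟨⟨s, hs, hsx.trans_le ht.1⟩, ⟨s', hs', ht.2.trans hsy⟩⟩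

theorem wa_tau_spec {T : Set ℝ} (hcl : IsClosed T) {t : ℝ} (ht : t ∈ waI T) :
    waTau T t ∈ T ∧ t ≤ waTau T t ∧ ∀ s ∈ T, t ≤ s → waTau T t ≤ s := by
  obtain ⟨⟨s0, hs0, hs0t⟩, ⟨s1, hs1, hts1⟩⟩ := ht
  unfold waTau
  split_ifs with hk
  · exact ⟨wa_kappa_sub T hk, le_rfl, fun s _ h => h⟩
  · have hT : t ∉ T := fun h => hk (wa_mem_kappa h ⟨s0, hs0, hs0t⟩)
    have e : {s | s ∈ tsKappa T ∧ t < s} = T ∩ Ici t := by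
      ext s
      constructor
      · rintro ⟨a, b⟩; exact ⟨wa_kappa_sub T a, le_of_lt b⟩
      · rintro ⟨a, b⟩
        have hlt : t < s := lt_of_le_of_ne b (by rintro rfl; exact hT a)
        exact ⟨wa_mem_kappa a ⟨s0, hs0, hs0t.trans hlt⟩, hlt⟩
    unfold tsSigma
    rw [e, if_pos ⟨s1, hs1, hts1⟩]
    have hbb : BddBelow (T ∩ Ici t) := ⟨t, fun x hx => hx.2⟩
    have hm := (hcl.inter isClosed_Ici).csInf_mem ⟨s1, hs1, hts1⟩ hbb
    exact ⟨hm.1, hm.2, fun s hs h => csInf_le hbb ⟨hs, h⟩⟩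

theorem wa_sigma_mono {S : Set ℝ} (hne : S.Nonempty) : Monotone (tsSigma S) := by
  intro x y hxy
  unfold tsSigma
  split_ifs with h1 h2 h2
  · exact csInf_le_csInf ⟨x, fun s hs => hs.2.le⟩ h2 fun s hs => ⟨hs.1, hxy.trans_lt hs.2⟩
  · have hba : BddAbove S := ⟨y, fun s hs => by
      by_contra hcon; exact h2 ⟨s, hs, not_le.1 hcon⟩⟩
    obtain ⟨s, hs⟩ := h1
    exact (csInf_le ⟨x, fun s hs => hs.2.le⟩ hs).trans (le_csSup hba hs.1)
  · obtain ⟨s, hs⟩ := h2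
    exact absurd ⟨s, hs.1, hxy.trans_lt hs.2⟩ h1
  · exact le_rfl

theorem wa_kappa_ne {T : Set ℝ} (hne : T.Nonempty) : (tsKappa T).Nonempty := by
  unfold tsKappa; split_ifs with hc
  · by_contra hcon
    rw [not_nonempty_iff_eq_empty, diff_eq_empty] at hcon
    have hT : T = {sInf T} := hne.subset_singleton_iff.1 hcon
    have h2 := hc.2
    unfold tsSigma at h2
    rw [if_neg] at h2
    · rw [hT] at h2; simp at h2
    · rintro ⟨s, hs, hlt⟩
      exact hlt.ne' (hcon hs)
  · exact hne

theorem wa_tau_meas {T : Set ℝ} (hne : T.Nonempty) (hcl : IsClosed T) : Measurable (waTau T) := by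
  unfold waTau
  exact Measurable.ite (wa_kappa_closed hne hcl).measurableSet measurable_id 
    (wa_sigma_mono (wa_kappa_ne hne)).measurable

theorem wa_rho_le {T : Set ℝ} {s d : ℝ} (hs : s ∈ T) (h : s < d) : s ≤ tsRho T d := by
  unfold tsRho
  rw [if_pos ⟨s, hs, h⟩]
  exact le_csSup ⟨d, fun x hx => hx.2.le⟩ ⟨hs, h⟩

theorem wa_map {T : Set ℝ} (hne : T.Nonempty) (hcl : IsClosed T) {ν : Measure ℝ}
    (hν : ∀ c d : ℝ, c ≤ d → ν (Set.Ico c d) = ENNReal.ofReal (tsRho T d - tsRho T c)) :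
    ν = (volume.restrict (waI T)).map (waTau T) := by
  haveI : IsLocallyFiniteMeasure ν := by
    refine ⟨fun x => ⟨Ico (x-1) (x+1), Ico_mem_nhds (by linarith) (by linarith), ?_⟩⟩
    rw [hν _ _ (by linarith)]; exact ENNReal.ofReal_lt_top
  have hm := wa_tau_meas hne hcl
  apply Measure.ext_of_Ico
  intro c d hcd
  rw [hν c d hcd.le, Measure.map_apply hm measurableSet_Ico, 
    Measure.restrict_apply (hm measurableSet_Ico)]
  apply le_antisymm
  · rw [← Real.volume_Ioo]
    apply measure_mono
    intro t ht
    have hd : ∃ s ∈ T, t < s ∧ s < d := by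
      have h2 := ht.2
      by_cases hn : ({s | s ∈ T ∧ s < d}).Nonempty
      · rw [tsRho, if_pos hn] at h2
        obtain ⟨s, hs, hts⟩ := exists_lt_of_lt_csSup hn h2
        exact ⟨s, hs.1, hts, hs.2⟩
      · exfalso
        have hn' : ¬ ({s | s ∈ T ∧ s < c}).Nonempty := by
          rintro ⟨s, h1, h2⟩; exact hn ⟨s, h1, h2.trans hcd⟩
        have h3 := ht.1.trans ht.2
        rw [tsRho, tsRho, if_neg hn, if_neg hn'] at h3
        exact lt_irrefl _ h3
    obtain ⟨s, hs, hts, hsd⟩ := hd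
    have hlow : ∃ s ∈ T, s < t := by
      by_cases hn : ({s | s ∈ T ∧ s < c}).Nonempty
      · obtain ⟨s', h1, h2⟩ := hn
        exact ⟨s', h1, (wa_rho_le h1 h2).trans_lt ht.1⟩
      · have h3 := ht.1
        rw [tsRho, if_neg hn] at h3
        exact exists_lt_of_csInf_lt hne h3
    have hI : t ∈ waI T := ⟨hlow, s, hs, hts.le⟩
    obtain ⟨k1, k2, k3⟩ := wa_tau_spec hcl hI
    refine ⟨⟨?_, (k3 s hs hts.le).trans_lt hsd⟩, hI⟩
    by_contra hcon
    have := wa_rho_le k1 (not_le.1 hcon)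
    linarith [ht.1]
  · rw [← Real.volume_Icc]
    apply measure_mono
    rintro t ⟨⟨h1, h2⟩, hI⟩
    obtain ⟨k1, k2, k3⟩ := wa_tau_spec hcl hI
    refine ⟨?_, k2.trans (wa_rho_le k1 h2)⟩
    by_cases hn : ({s | s ∈ T ∧ s < c}).Nonempty
    · rw [tsRho, if_pos hn]
      apply csSup_le hn
      rintro s ⟨hs, hsc⟩
      by_contra hcon
      have := k3 s hs (not_le.1 hcon).le
      linarith
    · rw [tsRho, if_neg hn]
      obtain ⟨s, hs, hst⟩ := hI.1
      refine (csInf_le ⟨c, fun x hx => ?_⟩ hs).trans hst.le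
      by_contra hcon
      exact hn ⟨x, hx, not_le.1 hcon⟩

theorem wa_g_li {T : Set ℝ} (hne : T.Nonempty) (hcl : IsClosed T) {ν : Measure ℝ}
    (hν : ∀ c d : ℝ, c ≤ d → ν (Set.Ico c d) = ENNReal.ofReal (tsRho T d - tsRho T c))
    {p : ℝ → ℝ} (hp : LocallyIntegrable (fun t => 1 / p t) ν) :
    LocallyIntegrable (fun t => 1 / extK T (cR p) t) volume := by
  have hg : (fun t => 1 / extK T (cR p) t) = fun t => (((fun s => 1 / p s) (waTau T t) : ℝ) : ℂ) := by
    ext t; rw [wa_extK]; simp [cR]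
  rw [hg]
  suffices h : LocallyIntegrable (fun t => (fun s => 1 / p s) (waTau T t)) volume by
    intro x
    obtain ⟨s, hs, hi⟩ := h x
    exact ⟨s, hs, hi.ofReal⟩
  rw [locallyIntegrable_iff]
  intro K hK
  obtain ⟨R, hR⟩ := hK.isBounded.subset_closedBall 0
  rw [Real.closedBall_eq_Icc] at hR
  simp only [zero_sub, zero_add] at hR
  refine IntegrableOn.mono_set ?_ hR
  have hm := wa_tau_meas hne hcl
  -- inside
  have hin : IntegrableOn (fun t => (fun s => 1 / p s) (waTau T t)) (Icc (-R) R ∩ waI T) volume := by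
    obtain ⟨R', hR'⟩ : ∃ R', ∀ t ∈ Icc (-R) R ∩ waI T, waTau T t ∈ Icc (-R) R' := by
      by_cases hs : ∃ s ∈ T, R ≤ s
      · obtain ⟨s, hs, hRs⟩ := hs
        refine ⟨s, fun t ht => ?_⟩
        obtain ⟨k1, k2, k3⟩ := wa_tau_spec hcl ht.2
        exact ⟨ht.1.1.trans k2, k3 s hs (ht.1.2.trans hRs)⟩
      · push Not at hs
        refine ⟨R, fun t ht => ?_⟩
        obtain ⟨k1, k2, k3⟩ := wa_tau_spec hcl ht.2
        exact ⟨ht.1.1.trans k2, (hs _ k1).le⟩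
    have h1 := hp.integrableOn_isCompact (isCompact_Icc (a := -R) (b := R'))
    rw [wa_map hne hcl hν, IntegrableOn, Measure.restrict_map hm measurableSet_Icc] at h1
    have h2 := h1.comp_measurable hm
    rw [Measure.restrict_restrict (hm measurableSet_Icc)] at h2
    exact IntegrableOn.mono_set h2 fun t ht => ⟨hR' t ht, ht.2⟩
  -- below
  have hlo : IntegrableOn (fun t => (fun s => 1 / p s) (waTau T t)) 
      (Icc (-R) R ∩ {t | ∀ s ∈ T, t < s}) volume := by
    have hms : MeasurableSet (Icc (-R) R ∩ {t | ∀ s ∈ T, t < s}) := by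
      refine measurableSet_Icc.inter (OrdConnected.measurableSet ?_)
      exact ⟨fun x hx y hy t ht s hs => ht.2.trans_lt (hy s hs)⟩
    refine IntegrableOn.congr_fun (f := fun _ => 1 / p (sInf (tsKappa T))) ?_ ?_ hms
    · refine integrableOn_const ?_ (by simp)
      exact ((measure_mono inter_subset_left).trans_lt 
        (isCompact_Icc.measure_lt_top (μ := volume))).ne
    · intro t ht
      have h1 : t ∉ tsKappa T := fun h => lt_irrefl _ (ht.2 t (wa_kappa_sub T h))
      have h2 : {s | s ∈ tsKappa T ∧ t < s} = tsKappa T := by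
        ext s; exact ⟨fun h => h.1, fun h => ⟨h, ht.2 s (wa_kappa_sub T h)⟩⟩
      simp only
      rw [waTau, if_neg h1, tsSigma, h2, if_pos (wa_kappa_ne hne)]
  have hhi : IntegrableOn (fun t => (fun s => 1 / p s) (waTau T t)) 
      (Icc (-R) R ∩ {t | ∀ s ∈ T, s < t}) volume := by
    have hms : MeasurableSet (Icc (-R) R ∩ {t | ∀ s ∈ T, s < t}) := by
      refine measurableSet_Icc.inter (OrdConnected.measurableSet ?_)
      exact ⟨fun x hx y hy t ht s hs => (hx s hs).trans_le ht.1⟩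
    refine IntegrableOn.congr_fun (f := fun _ => 1 / p (sSup (tsKappa T))) ?_ ?_ hms
    · refine integrableOn_const ?_ (by simp)
      exact ((measure_mono inter_subset_left).trans_lt 
        (isCompact_Icc.measure_lt_top (μ := volume))).ne
    · intro t ht
      have h1 : t ∉ tsKappa T := fun h => lt_irrefl _ (ht.2 t (wa_kappa_sub T h))
      have h2 : ¬ ({s | s ∈ tsKappa T ∧ t < s}).Nonempty := by
        rintro ⟨s, h, h'⟩
        exact lt_asymm h' (ht.2 s (wa_kappa_sub T h))
      simp only
      rw [waTau, if_neg h1, tsSigma, if_neg h2]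
  have hpt : IntegrableOn (fun t => (fun s => 1 / p s) (waTau T t)) {sInf T} volume := by
    rw [IntegrableOn, Measure.restrict_eq_zero.2 (by simp)]
    exact integrable_zero_measure
  refine (((hin.union hlo).union hhi).union hpt).mono_set ?_
  intro t ht
  by_cases h1 : ∃ s ∈ T, s < t
  · by_cases h2 : ∃ s ∈ T, t ≤ s
    · exact Or.inl (Or.inl (Or.inl ⟨ht, h1, h2⟩))
    · push Not at h2
      exact Or.inl (Or.inr ⟨ht, h2⟩)
  · push Not at h1
    by_cases h2 : t ∈ T
    · right
      exact le_antisymm (le_csInf hne h1) (csInf_le ⟨t, h1⟩ h2)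
    · refine Or.inl (Or.inl (Or.inr ⟨ht, fun s hs => lt_of_le_of_ne (h1 s hs) ?_⟩))
      rintro rfl; exact h2 hs

theorem wa_local {μ : Measure ℝ} {r : ℝ → ℝ} (hr : LocallyIntegrable r μ) 
    (hrpos : ∀ᵐ t ∂μ, 0 < r t) {u : ℝ → ℂ} (hu : Continuous u) {J : Set ℝ} {x y : ℝ} 
    (hJ : J ⊆ Icc x y) :
    ∫⁻ t in J, sqWeight r u t ∂μ < ∞ := by
  rw [wa_l2_iff hr hrpos hu]
  have : LocallyIntegrable (fun t => |r t|) μ := fun x => (hr x).norm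
  have h2 : LocallyIntegrable (fun t => ‖u t‖ ^ 2 * |r t|) μ := by
    simpa [smul_eq_mul] using this.continuous_smul (hu.norm.pow 2)
  exact (h2.integrableOn_isCompact isCompact_Icc).mono_set hJ

theorem wa_l2left {T : Set ℝ} {μ : Measure ℝ} {r : ℝ → ℝ} (hne : T.Nonempty)
    (hnull : μ (tsKappa T)ᶜ = 0) (hT : ¬ BddBelow T) 
    (hr : LocallyIntegrable r μ) 
    (hrpos : ∀ᵐ t ∂μ, 0 < r t) {u : ℝ → ℂ} (hu : Continuous u) :
    L2NearLeft T μ r u ↔ ∀ c, ∫⁻ t in Iic c, sqWeight r u t ∂μ < ∞ := by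
  have e : ∀ c, ∫⁻ t in {t | (∃ s ∈ T, s < t) ∧ t ≤ c} ∩ tsKappa T, sqWeight r u t ∂μ = 
      ∫⁻ t in Iic c, sqWeight r u t ∂μ := by
    intro c
    have : {t | (∃ s ∈ T, s < t) ∧ t ≤ c} = Iic c := by
      ext t
      refine ⟨fun h => h.2, fun h => ⟨?_, h⟩⟩
      by_contra hcon
      push Not at hcon
      exact hT ⟨t, hcon⟩
    rw [this]
    apply setLIntegral_congr
    apply inter_ae_eq_left_of_ae_eq_univ
    exact eventuallyEq_univ.2 hnull
  simp only [L2NearLeft, e]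
  refine ⟨fun h c => ?_, fun h c _ => h c⟩
  obtain ⟨c0, hc0⟩ := wa_kappa_ne hne
  refine (lintegral_mono_set (t := Iic c0 ∪ Icc c0 c) ?_).trans_lt 
    ((lintegral_union_le _ _ _).trans_lt (ENNReal.add_lt_top.2 ⟨h c0 hc0, ?_⟩))
  · intro t ht
    rcases le_total t c0 with h | h
    · exact Or.inl h
    · exact Or.inr ⟨h, ht⟩
  · exact wa_local hr hrpos hu subset_rfl

theorem wa_l2right {T : Set ℝ} {μ : Measure ℝ} {r : ℝ → ℝ} (hne : T.Nonempty)
    (hnull : μ (tsKappa T)ᶜ = 0) (hT : ¬ BddAbove T) 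
    (hr : LocallyIntegrable r μ) 
    (hrpos : ∀ᵐ t ∂μ, 0 < r t) {u : ℝ → ℂ} (hu : Continuous u) :
    L2NearRight T μ r u ↔ ∀ c, ∫⁻ t in Ioi c, sqWeight r u t ∂μ < ∞ := by
  have e : ∀ c, ∫⁻ t in {t | c ≤ t ∧ (∃ s ∈ T, t < s)} ∩ tsKappa T, sqWeight r u t ∂μ = 
      ∫⁻ t in Ici c, sqWeight r u t ∂μ := by
    intro c
    have : {t | c ≤ t ∧ (∃ s ∈ T, t < s)} = Ici c := by
      ext t
      refine ⟨fun h => h.1, fun h => ⟨h, ?_⟩⟩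
      by_contra hcon
      push Not at hcon
      exact hT ⟨t, hcon⟩
    rw [this]
    apply setLIntegral_congr
    apply inter_ae_eq_left_of_ae_eq_univ
    exact eventuallyEq_univ.2 hnull
  simp only [L2NearRight, e]
  refine ⟨fun h c => ?_, fun h c _ => ?_⟩
  · obtain ⟨c0, hc0⟩ := wa_kappa_ne hne
    refine (lintegral_mono_set (t := Ici c0 ∪ Icc c c0) ?_).trans_lt 
      ((lintegral_union_le _ _ _).trans_lt (ENNReal.add_lt_top.2 ⟨h c0 hc0, ?_⟩))
    · intro t ht
      rcases le_total c0 t with h | h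
      · exact Or.inl h
      · exact Or.inr ⟨le_of_lt ht, h⟩
    · exact wa_local hr hrpos hu subset_rfl
  · refine (lintegral_mono_set (t := Ioi (c-1)) ?_).trans_lt (h (c-1))
    intro t ht
    simp only [mem_Ici, mem_Ioi] at ht ⊢
    linarith

/-- Weyl's alternative: if for some `z₀ ∈ ℂ` every solution of `(ℓ - z₀) u = 0` lies in `L²`
near `a`, then for every `z ∈ ℂ` every solution of `(ℓ - z) u = 0` lies in `L²` near `a`;
consequently `ℓ` is either in the limit-circle or in the limit-point case at `a`, and
likewise at `b`. -/
theorem weyl_alternative_time_scale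
    (T : Set ℝ) (hne : T.Nonempty) (hcl : IsClosed T)
    (hfive : ∃ s : Finset ℝ, ↑s ⊆ T ∧ 5 ≤ s.card)
    (μ ν : Measure ℝ)
    (hμ : ∀ c d : ℝ, c ≤ d →
      μ (Set.Ioc c d) = ENNReal.ofReal (tsSigma (tsKappa T) d - tsSigma (tsKappa T) c))
    (hν : ∀ c d : ℝ, c ≤ d → ν (Set.Ico c d) = ENNReal.ofReal (tsRho T d - tsRho T c))
    (p r q : ℝ → ℝ)
    (hr : LocallyIntegrable r μ) (hrpos : ∀ᵐ t ∂μ, 0 < r t)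
    (hq : LocallyIntegrable q μ)
    (hpne : ∀ᵐ t ∂ν, p t ≠ 0) (hp : LocallyIntegrable (fun t => 1 / p t) ν)
    :
    ((∃ z₀ : ℂ, ∀ u u1 : ℝ → ℂ,
        IsSLSol T μ (cR p) (cR r) (cR q) z₀ 0 u u1 → L2NearLeft T μ r u) →
      ∀ z : ℂ, ∀ u u1 : ℝ → ℂ,
        IsSLSol T μ (cR p) (cR r) (cR q) z 0 u u1 → L2NearLeft T μ r u) ∧
    (LimitCircleLeft T μ p r q ∨ LimitPointLeft T μ p r q) ∧
    (LimitCircleRight T μ p r q ∨ LimitPointRight T μ p r q) := by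
  haveI := wa_locfin hμ
  have hnull := wa_null hne hcl hμ
  have hg := wa_g_li hne hcl hν hp
  have hsol := fun z u v => wa_sol_iff (T := T) (p := p) hg hr hq z u v
  have hleft : (∃ z₀ : ℂ, ∀ u u1 : ℝ → ℂ,
        IsSLSol T μ (cR p) (cR r) (cR q) z₀ 0 u u1 → L2NearLeft T μ r u) →
      ∀ z : ℂ, ∀ u u1 : ℝ → ℂ,
        IsSLSol T μ (cR p) (cR r) (cR q) z 0 u u1 → L2NearLeft T μ r u := by
    rintro ⟨z0, h0⟩ z u u1 h
    rw [hsol] at h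
    by_cases hT : BddBelow T
    · obtain ⟨a, ha⟩ := hT
      intro c _
      apply wa_local hr hrpos h.cont (x := a) (y := c)
      rintro t ⟨⟨⟨s, hs, hst⟩, htc⟩, _⟩
      exact ⟨(ha hs).trans hst.le, htc⟩
    · rw [wa_l2left hne hnull hT hr hrpos h.cont]
      refine wa_left hg hr hrpos hq (z0 := z0) ?_ h
      intro f f1 hf
      rw [← wa_l2left hne hnull hT hr hrpos hf.cont]
      exact h0 f f1 ((hsol _ _ _).2 hf)
  have hright : (∃ z₀ : ℂ, ∀ u u1 : ℝ → ℂ,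
        IsSLSol T μ (cR p) (cR r) (cR q) z₀ 0 u u1 → L2NearRight T μ r u) →
      ∀ z : ℂ, ∀ u u1 : ℝ → ℂ,
        IsSLSol T μ (cR p) (cR r) (cR q) z 0 u u1 → L2NearRight T μ r u := by
    rintro ⟨z0, h0⟩ z u u1 h
    rw [hsol] at h
    by_cases hT : BddAbove T
    · obtain ⟨b, hb⟩ := hT
      intro c _
      apply wa_local hr hrpos h.cont (x := c) (y := b)
      rintro t ⟨⟨htc, ⟨s, hs, hst⟩⟩, _⟩
      exact ⟨htc, hst.le.trans (hb hs)⟩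
    · rw [wa_l2right hne hnull hT hr hrpos h.cont]
      refine wa_right hg hr hrpos hq (z0 := z0) ?_ h
      intro f f1 hf
      rw [← wa_l2right hne hnull hT hr hrpos hf.cont]
      exact h0 f f1 ((hsol _ _ _).2 hf)
  refine ⟨hleft, ?_, ?_⟩
  · by_cases h : LimitPointLeft T μ p r q
    · exact Or.inr h
    · left
      unfold LimitPointLeft at h
      push Not at h
      exact hleft h
  · by_cases h : LimitPointRight T μ p r q
    · exact Or.inr h
    · left
      unfold LimitPointRight at h
      push Not at h
      exact hright h
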